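/- For every s ∈ (0,2) there exists C > 0 such that for every differentiable u : ℝ³ → ℂ with u, ∇u ∈ L²(ℝ³), every measurable α : ℝ³ → ℂ, and every θ ∈ [−1,1]: setting ŵ(k) = ∫_{ℝ³} e^{−ik·y}|u(y)|² dy and α^θ(k) = α(k) + θ·(2π)^{−3/2}·B₀(k)·ŵ(k), one has (∫_{ℝ³} ω(k)^{2s}|α^θ(k)|² dk)^{1/2} ≤ (∫_{ℝ³} ω(k)^{2s}|α(k)|² dk)^{1/2} + C ‖u‖_{H¹}². -/

import Mathlib

/-!
Since `|∇|u|²| ≤ 2|u||∇u| ≤ |u|² + |∇u|²`, the density `|u|²` and its gradient are both integrable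
with `L¹`-norm at most `‖u‖_{H¹}²`, so integrating by parts once gives `|ŵ| ≲ ω⁻¹‖u‖_{H¹}²`.
Together with `B₀ ≤ ω^{-5/2}` the shift `α^θ - α` is `O(|θ| ω^{-7/2} ‖u‖_{H¹}²)`, and
`ω^{s - 7/2}` is square integrable on `ℝ³` exactly when `s < 2`.
-/

open MeasureTheory
open scoped ENNReal

noncomputable section

/-- The dispersion relation `ω(k) = √(1+|k|²)` of the massive scalar field. -/
def ω (k : EuclideanSpace ℝ (Fin 3)) : ℝ := Real.sqrt (1 + ‖k‖ ^ 2)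

/-- The Gross dressing form factor `B₀(k) = 1/(√(ω(k))·(|k|²+ω(k)))`. -/
def B0 (k : EuclideanSpace ℝ (Fin 3)) : ℝ := 1 / (Real.sqrt (ω k) * (‖k‖ ^ 2 + ω k))

/-- The square of the `H¹`-norm, `‖u‖_{H¹}² = ‖u‖_{L²}² + ‖∇u‖_{L²}²`. -/
def H1sq (u : EuclideanSpace ℝ (Fin 3) → ℂ) : ℝ :=
  (∫ x, ‖u x‖ ^ 2) + ∫ x, ‖fderiv ℝ u x‖ ^ 2

/-- The `H¹`-norm of `u`. -/
def H1norm (u : EuclideanSpace ℝ (Fin 3) → ℂ) : ℝ := Real.sqrt (H1sq u)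

/-- `ŵ(k) = ∫ e^{−ik·y}|u(y)|² dy`. -/
def what (u : EuclideanSpace ℝ (Fin 3) → ℂ) (k : EuclideanSpace ℝ (Fin 3)) : ℂ :=
  ∫ y, Complex.exp (-(Complex.I * ((inner ℝ k y : ℝ) : ℂ))) * ((‖u y‖ ^ 2 : ℝ) : ℂ)

/-- The field component of the mean-field dressing flow,
`α^θ(k) = α(k) + θ·(2π)^{−3/2}·B₀(k)·ŵ(k)`. -/
def αθ (u α : EuclideanSpace ℝ (Fin 3) → ℂ) (θ : ℝ) (k : EuclideanSpace ℝ (Fin 3)) : ℂ :=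
  α k + (θ : ℂ) * (((2 * Real.pi) ^ (-(3 : ℝ) / 2) : ℝ) : ℂ) * ((B0 k : ℝ) : ℂ) * what u k

open scoped FourierTransform

section Fourier

variable {V F : Type*} [NormedAddCommGroup V] [InnerProductSpace ℝ V] [FiniteDimensional ℝ V]
  [MeasurableSpace V] [BorelSpace V] [NormedAddCommGroup F] [NormedSpace ℂ F]

theorem two_pi_mul_norm_mul_norm_fourier_le {f : V → F} (hf : Integrable f)
    (hd : Differentiable ℝ f) (hdf : Integrable (fderiv ℝ f)) (ξ : V) :
    2 * Real.pi * ‖ξ‖ * ‖𝓕 f ξ‖ ≤ ∫ x, ‖fderiv ℝ f x‖ :=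
  calc 2 * Real.pi * ‖ξ‖ * ‖𝓕 f ξ‖ = ‖𝓕 (fderiv ℝ f) ξ‖ := by
        rw [Real.fourier_fderiv hf hd hdf, VectorFourier.norm_fourierSMulRight,
          neg_apply, norm_neg, innerSL_apply_norm]
    _ ≤ ∫ x, ‖fderiv ℝ f x‖ := VectorFourier.norm_fourierIntegral_le_integral_norm _ _ _ _ _

theorem two_pi_mul_norm_mul_norm_fourier_ofReal_le {f : V → ℝ} (hf : Integrable f)
    (hd : Differentiable ℝ f) (hdf : Integrable (fderiv ℝ f)) (ξ : V) :
    2 * Real.pi * ‖ξ‖ * ‖𝓕 (fun x => (f x : ℂ)) ξ‖ ≤ ∫ x, ‖fderiv ℝ f x‖ := by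
  have hfderiv : fderiv ℝ (fun x => (f x : ℂ)) = fun x => Complex.ofRealCLM ∘L fderiv ℝ f x :=
    funext fun x => (Complex.ofRealCLM.hasFDerivAt.comp x (hd x).hasFDerivAt).fderiv
  have hnorm (x : V) : ‖fderiv ℝ (fun x => (f x : ℂ)) x‖ = ‖fderiv ℝ f x‖ := by
    rw [hfderiv]
    exact Complex.ofRealLI.norm_toContinuousLinearMap_comp
  simp only [← hnorm]
  have h_int : Integrable (fderiv ℝ fun x => (f x : ℂ)) := by
    rw [hfderiv]
    exact (ContinuousLinearMap.compL ℝ V ℝ ℂ Complex.ofRealCLM).integrable_comp hdf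
  exact two_pi_mul_norm_mul_norm_fourier_le hf.ofReal
    (Complex.ofRealCLM.differentiable.comp hd) h_int ξ

end Fourier

section NormSq

variable {E F : Type*} [NormedAddCommGroup E] [NormedSpace ℝ E] [NormedAddCommGroup F]
  [InnerProductSpace ℝ F] {u : E → F}

theorem fderiv_norm_sq_comp {x : E} (hd : DifferentiableAt ℝ u x) :
    fderiv ℝ (fun y => ‖u y‖ ^ 2) x = (2 : ℝ) • (innerSL ℝ (u x) ∘L fderiv ℝ u x) := by
  rw [hd.hasFDerivAt.norm_sq.fderiv, two_nsmul, two_smul]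

theorem norm_fderiv_norm_sq_le {x : E} (hd : DifferentiableAt ℝ u x) :
    ‖fderiv ℝ (fun y => ‖u y‖ ^ 2) x‖ ≤ ‖u x‖ ^ 2 + ‖fderiv ℝ u x‖ ^ 2 :=
  calc ‖fderiv ℝ (fun y => ‖u y‖ ^ 2) x‖ = 2 * ‖innerSL ℝ (u x) ∘L fderiv ℝ u x‖ := by
        rw [fderiv_norm_sq_comp hd, norm_smul, Real.norm_ofNat]
    _ ≤ 2 * (‖u x‖ * ‖fderiv ℝ u x‖) := by
        gcongr
        exact (ContinuousLinearMap.opNorm_comp_le _ _).trans_eq (by rw [innerSL_apply_norm])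
    _ ≤ ‖u x‖ ^ 2 + ‖fderiv ℝ u x‖ ^ 2 := by
        linarith [two_mul_le_add_sq ‖u x‖ ‖fderiv ℝ u x‖]

variable [MeasurableSpace E] {μ : Measure E}

theorem integrable_fderiv_norm_sq (hd : Differentiable ℝ u) (hu : MemLp u 2 μ)
    (hdu : MemLp (fderiv ℝ u) 2 μ) : Integrable (fderiv ℝ fun x => ‖u x‖ ^ 2) μ := by
  have hfderiv : (fderiv ℝ fun x => ‖u x‖ ^ 2) =
      fun x => (2 : ℝ) • (innerSL ℝ (u x) ∘L fderiv ℝ u x) :=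
    funext fun x => fderiv_norm_sq_comp (hd x)
  have hcomp : MemLp (fun x => innerSL ℝ (u x) ∘L fderiv ℝ u x) 1 μ :=
    (ContinuousLinearMap.compL ℝ E F ℝ ∘L innerSL ℝ).memLp_of_bilin 1 hu hdu
  rw [hfderiv]
  exact (memLp_one_iff_integrable.1 hcomp).smul (2 : ℝ)

theorem integral_norm_fderiv_norm_sq_le (hd : Differentiable ℝ u) (hu : MemLp u 2 μ)
    (hdu : MemLp (fderiv ℝ u) 2 μ) :
    ∫ x, ‖fderiv ℝ (fun y => ‖u y‖ ^ 2) x‖ ∂μ ≤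
      (∫ x, ‖u x‖ ^ 2 ∂μ) + ∫ x, ‖fderiv ℝ u x‖ ^ 2 ∂μ := by
  have hu_sq := hu.integrable_norm_pow two_ne_zero
  have hdu_sq := hdu.integrable_norm_pow two_ne_zero
  rw [← integral_add hu_sq hdu_sq]
  exact integral_mono (integrable_fderiv_norm_sq hd hu hdu).norm (hu_sq.add hdu_sq)
    fun x => norm_fderiv_norm_sq_le (hd x)

end NormSq

section Dispersion

variable (k : EuclideanSpace ℝ (Fin 3))

theorem ω_sq : ω k ^ 2 = 1 + ‖k‖ ^ 2 :=
  Real.sq_sqrt (by positivity)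

theorem one_le_ω : 1 ≤ ω k :=
  Real.one_le_sqrt.2 (le_add_of_nonneg_right (sq_nonneg _))

theorem ω_pos : 0 < ω k :=
  zero_lt_one.trans_le (one_le_ω k)

theorem ω_le_one_add_norm : ω k ≤ 1 + ‖k‖ :=
  sqrt_one_add_norm_sq_le k

theorem continuous_ω : Continuous ω := by
  unfold ω
  fun_prop

theorem continuous_ω_rpow (r : ℝ) : Continuous fun k => ω k ^ r :=
  continuous_ω.rpow_const fun k => Or.inl (ω_pos k).ne'

theorem memLp_two_ω_rpow {r : ℝ} (hr : r < -3 / 2) : MemLp (fun k => ω k ^ r) 2 volume := by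
  rw [memLp_two_iff_integrable_sq (continuous_ω_rpow r).aestronglyMeasurable]
  have h_int : Integrable fun k : EuclideanSpace ℝ (Fin 3) => (1 + ‖k‖ ^ 2) ^ (-(-2 * r) / 2) :=
    integrable_rpow_neg_one_add_norm_sq
      (by rw [finrank_euclideanSpace_fin, Nat.cast_ofNat]; linarith)
  refine h_int.congr (.of_forall fun k => ?_)
  beta_reduce
  rw [← ω_sq, ← Real.rpow_natCast_mul (ω_pos k).le, ← Real.rpow_mul_natCast (ω_pos k).le]
  congr 1
  push_cast
  ring

theorem continuous_B0 : Continuous B0 := by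
  have hne (k : EuclideanSpace ℝ (Fin 3)) : √(ω k) * (‖k‖ ^ 2 + ω k) ≠ 0 := by
    have := ω_pos k
    positivity
  exact continuous_const.div
    (continuous_ω.sqrt.mul ((continuous_norm.pow 2).add continuous_ω)) hne

theorem B0_nonneg : 0 ≤ B0 k := by
  have := ω_pos k
  unfold B0
  positivity

theorem B0_le_ω_rpow : B0 k ≤ ω k ^ (-5 / 2 : ℝ) := by
  have hω := ω_pos k
  calc B0 k ≤ 1 / (√(ω k) * ω k ^ 2) := by
        unfold B0
        gcongr
        linarith [ω_sq k, one_le_ω k]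
    _ = ω k ^ (-5 / 2 : ℝ) := by
        rw [Real.sqrt_eq_rpow, ← Real.rpow_add_natCast hω.ne', one_div, ← Real.rpow_neg hω.le]
        norm_num

end Dispersion

section FourierDensity

variable {u : EuclideanSpace ℝ (Fin 3) → ℂ}

theorem H1sq_nonneg (u : EuclideanSpace ℝ (Fin 3) → ℂ) : 0 ≤ H1sq u := by
  unfold H1sq
  positivity

theorem H1norm_sq (u : EuclideanSpace ℝ (Fin 3) → ℂ) : H1norm u ^ 2 = H1sq u :=
  Real.sq_sqrt (H1sq_nonneg u)

theorem what_eq_fourier (u : EuclideanSpace ℝ (Fin 3) → ℂ) (k : EuclideanSpace ℝ (Fin 3)) :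
    what u k = 𝓕 (fun y => ((‖u y‖ ^ 2 : ℝ) : ℂ)) ((2 * Real.pi)⁻¹ • k) := by
  rw [what, Real.fourier_eq']
  refine integral_congr_ae (.of_forall fun y => ?_)
  simp only [smul_eq_mul, inner_smul_right, real_inner_comm k y]
  congr 2
  push_cast
  field_simp

theorem continuous_what (hu : MemLp u 2 volume) : Continuous (what u) := by
  have h_int : Integrable fun y => ((‖u y‖ ^ 2 : ℝ) : ℂ) :=
    (hu.integrable_norm_pow two_ne_zero).ofReal
  have hcont : Continuous (𝓕 fun y => ((‖u y‖ ^ 2 : ℝ) : ℂ)) :=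
    VectorFourier.fourierIntegral_continuous Real.continuous_fourierChar continuous_inner h_int
  rw [funext (what_eq_fourier u)]
  exact hcont.comp (continuous_const_smul _)

theorem norm_what_le_integral_norm_sq (u : EuclideanSpace ℝ (Fin 3) → ℂ)
    (k : EuclideanSpace ℝ (Fin 3)) : ‖what u k‖ ≤ ∫ y, ‖u y‖ ^ 2 :=
  calc ‖what u k‖ ≤ ∫ y, ‖((‖u y‖ ^ 2 : ℝ) : ℂ)‖ := by
        rw [what_eq_fourier]
        exact VectorFourier.norm_fourierIntegral_le_integral_norm _ _ _ _ _
    _ = ∫ y, ‖u y‖ ^ 2 := by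
        simp only [Complex.norm_real, Real.norm_of_nonneg (sq_nonneg _)]

theorem integral_norm_sq_le_H1sq (u : EuclideanSpace ℝ (Fin 3) → ℂ) :
    ∫ y, ‖u y‖ ^ 2 ≤ H1sq u :=
  le_add_of_nonneg_right (by positivity)

theorem norm_mul_norm_what_le_H1sq (hd : Differentiable ℝ u) (hu : MemLp u 2 volume)
    (hdu : MemLp (fderiv ℝ u) 2 volume) (k : EuclideanSpace ℝ (Fin 3)) :
    ‖k‖ * ‖what u k‖ ≤ H1sq u :=
  calc ‖k‖ * ‖what u k‖ = 2 * Real.pi * ‖(2 * Real.pi)⁻¹ • k‖ * ‖what u k‖ := by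
        rw [norm_smul, Real.norm_of_nonneg (by positivity), mul_inv_cancel_left₀ (by positivity)]
    _ ≤ ∫ x, ‖fderiv ℝ (fun y => ‖u y‖ ^ 2) x‖ := by
        rw [what_eq_fourier]
        exact two_pi_mul_norm_mul_norm_fourier_ofReal_le (hu.integrable_norm_pow two_ne_zero)
          (hd.norm_sq ℝ) (integrable_fderiv_norm_sq hd hu hdu) _
    _ ≤ H1sq u := integral_norm_fderiv_norm_sq_le hd hu hdu

theorem ω_mul_norm_what_le (hd : Differentiable ℝ u) (hu : MemLp u 2 volume)
    (hdu : MemLp (fderiv ℝ u) 2 volume) (k : EuclideanSpace ℝ (Fin 3)) :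
    ω k * ‖what u k‖ ≤ 2 * H1sq u :=
  calc ω k * ‖what u k‖ ≤ (1 + ‖k‖) * ‖what u k‖ := by
        gcongr
        exact ω_le_one_add_norm k
    _ = ‖what u k‖ + ‖k‖ * ‖what u k‖ := by ring
    _ ≤ 2 * H1sq u := by
        linarith [norm_what_le_integral_norm_sq u k, integral_norm_sq_le_H1sq u,
          norm_mul_norm_what_le_H1sq hd hu hdu k]

end FourierDensity

section WeightedNorm

/-- The norm `‖α‖_{h_s}` of the `L²` space with weight `ω^{2s}`, with value `∞` when `α` does not
belong to that space. -/
def hsNorm (s : ℝ) (α : EuclideanSpace ℝ (Fin 3) → ℂ) : ℝ≥0∞ :=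
  eLpNorm (fun k => ω k ^ s • α k) 2 volume

variable {α β : EuclideanSpace ℝ (Fin 3) → ℂ}

theorem hsNorm_eq_lintegral (s : ℝ) (α : EuclideanSpace ℝ (Fin 3) → ℂ) :
    hsNorm s α = (∫⁻ k, ENNReal.ofReal (ω k ^ (2 * s) * ‖α k‖ ^ 2)) ^ (1 / 2 : ℝ) := by
  rw [hsNorm, eLpNorm_eq_lintegral_rpow_enorm_toReal two_ne_zero ENNReal.ofNat_ne_top,
    ENNReal.toReal_ofNat]
  congr 2 with k
  have hω := ω_pos k
  rw [ENNReal.rpow_two, ← ofReal_norm, ← ENNReal.ofReal_pow (norm_nonneg _), norm_smul,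
    Real.norm_of_nonneg (by positivity), mul_pow, ← Real.rpow_mul_natCast hω.le, mul_comm s]
  norm_num

theorem hsNorm_add_le (s : ℝ) (hα : AEStronglyMeasurable α) (hβ : AEStronglyMeasurable β) :
    hsNorm s (α + β) ≤ hsNorm s α + hsNorm s β := by
  have hω := (continuous_ω_rpow s).aestronglyMeasurable (μ := volume)
  simp only [hsNorm, Pi.add_apply, smul_add]
  exact eLpNorm_add_le (hω.smul hα) (hω.smul hβ) one_le_two

theorem hsNorm_const_smul (s : ℝ) (c : ℂ) (α : EuclideanSpace ℝ (Fin 3) → ℂ) :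
    hsNorm s (c • α) = ‖c‖ₑ * hsNorm s α := by
  simp only [hsNorm, Pi.smul_apply, smul_comm _ c]
  exact eLpNorm_const_smul c _ 2 volume

theorem hsNorm_le_mul_eLpNorm_ω_rpow (s : ℝ) {c r : ℝ} (h : ∀ k, ‖α k‖ ≤ c * ω k ^ r) :
    hsNorm s α ≤ ENNReal.ofReal c * eLpNorm (fun k => ω k ^ (s + r)) 2 volume := by
  refine eLpNorm_le_mul_eLpNorm_of_ae_le_mul (.of_forall fun k => ?_) 2
  have hω := ω_pos k
  rw [norm_smul, Real.norm_of_nonneg (by positivity), Real.norm_of_nonneg (by positivity),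
    Real.rpow_add hω, mul_left_comm]
  gcongr
  exact h k

end WeightedNorm

section Dressing

/-- The velocity `(2π)^{-3/2} B₀ ŵ` of the dressing flow, so that `α^θ = α + θ · dressing u`. -/
def dressing (u : EuclideanSpace ℝ (Fin 3) → ℂ) (k : EuclideanSpace ℝ (Fin 3)) : ℂ :=
  (((2 * Real.pi) ^ (-(3 : ℝ) / 2) : ℝ) : ℂ) * B0 k * what u k

variable {u α : EuclideanSpace ℝ (Fin 3) → ℂ}

theorem αθ_eq_add_smul_dressing (u α : EuclideanSpace ℝ (Fin 3) → ℂ) (θ : ℝ) :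
    αθ u α θ = α + (θ : ℂ) • dressing u := by
  ext k
  simp only [αθ, dressing, Pi.add_apply, Pi.smul_apply, smul_eq_mul, mul_assoc]

theorem continuous_dressing (hu : MemLp u 2 volume) : Continuous (dressing u) :=
  (continuous_const.mul (Complex.continuous_ofReal.comp continuous_B0)).mul (continuous_what hu)

theorem norm_dressing_le (hd : Differentiable ℝ u) (hu : MemLp u 2 volume)
    (hdu : MemLp (fderiv ℝ u) 2 volume) (k : EuclideanSpace ℝ (Fin 3)) :
    ‖dressing u k‖ ≤ 2 * H1sq u * ω k ^ (-7 / 2 : ℝ) := by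
  have hω := ω_pos k
  have hconst : (2 * Real.pi) ^ (-(3 : ℝ) / 2) ≤ 1 :=
    Real.rpow_le_one_of_one_le_of_nonpos (by linarith [Real.pi_gt_three]) (by norm_num)
  have hwhat : ‖what u k‖ ≤ 2 * H1sq u / ω k :=
    (le_div_iff₀' hω).2 (ω_mul_norm_what_le hd hu hdu k)
  have hB0 := B0_nonneg k
  calc ‖dressing u k‖ = (2 * Real.pi) ^ (-(3 : ℝ) / 2) * B0 k * ‖what u k‖ := by
        rw [dressing, norm_mul, norm_mul, Complex.norm_of_nonneg (by positivity),
          Complex.norm_of_nonneg hB0]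
    _ ≤ 1 * ω k ^ (-5 / 2 : ℝ) * (2 * H1sq u / ω k) := by
        gcongr
        exact B0_le_ω_rpow k
    _ = 2 * H1sq u * (ω k ^ (-5 / 2 : ℝ) / ω k) := by ring
    _ = 2 * H1sq u * ω k ^ (-7 / 2 : ℝ) := by
        rw [← Real.rpow_sub_one hω.ne']
        norm_num

theorem exists_hsNorm_dressing_le {s : ℝ} (hs : s < 2) :
    ∃ C > 0, ∀ u : EuclideanSpace ℝ (Fin 3) → ℂ, Differentiable ℝ u → MemLp u 2 volume →
      MemLp (fderiv ℝ u) 2 volume → hsNorm s (dressing u) ≤ ENNReal.ofReal (C * H1norm u ^ 2) := by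
  set N := eLpNorm (fun k => ω k ^ (s + -7 / 2)) 2 volume
  have hN : N ≠ ∞ := (memLp_two_ω_rpow (by linarith)).eLpNorm_ne_top
  refine ⟨2 * N.toReal + 1, by positivity, fun u hd hu hdu => ?_⟩
  have hH := H1sq_nonneg u
  calc hsNorm s (dressing u) ≤ ENNReal.ofReal (2 * H1sq u) * N :=
        hsNorm_le_mul_eLpNorm_ω_rpow s (norm_dressing_le hd hu hdu)
    _ = ENNReal.ofReal (2 * H1sq u * N.toReal) := by
        rw [ENNReal.ofReal_mul (p := 2 * H1sq u) (by positivity), ENNReal.ofReal_toReal hN]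
    _ ≤ ENNReal.ofReal ((2 * N.toReal + 1) * H1norm u ^ 2) := by
        rw [H1norm_sq, mul_right_comm]
        gcongr
        exact le_add_of_nonneg_right zero_le_one

end Dressing

theorem dressing_flow_preserves_hs_general {s : ℝ} (hs : s < 2) :
    ∃ C > 0, ∀ u α : EuclideanSpace ℝ (Fin 3) → ℂ,
      Differentiable ℝ u → MemLp u 2 volume → MemLp (fderiv ℝ u) 2 volume →
      AEStronglyMeasurable α → ∀ θ : ℝ,
        hsNorm s (αθ u α θ) ≤ hsNorm s α + ENNReal.ofReal (C * |θ| * H1norm u ^ 2) := by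
  obtain ⟨C, hC, hdressing⟩ := exists_hsNorm_dressing_le hs
  refine ⟨C, hC, fun u α hd hu hdu hα θ => ?_⟩
  have hmeas := (continuous_dressing hu).aestronglyMeasurable (μ := volume)
  calc hsNorm s (αθ u α θ) = hsNorm s (α + (θ : ℂ) • dressing u) := by
        rw [αθ_eq_add_smul_dressing]
    _ ≤ hsNorm s α + hsNorm s ((θ : ℂ) • dressing u) := hsNorm_add_le s hα (hmeas.const_smul _)
    _ = hsNorm s α + ENNReal.ofReal |θ| * hsNorm s (dressing u) := by
        rw [hsNorm_const_smul, ← ofReal_norm, Complex.norm_real, Real.norm_eq_abs]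
    _ ≤ hsNorm s α + ENNReal.ofReal (C * |θ| * H1norm u ^ 2) := by
        rw [mul_comm C, mul_assoc, ENNReal.ofReal_mul (abs_nonneg θ)]
        gcongr
        exact hdressing u hd hu hdu

/-- For every `s ∈ (0,2)` there is `C > 0` such that for every differentiable `u` with
`u, ∇u ∈ L²`, every measurable `α`, and every `θ ∈ [−1,1]`:
`‖α^θ‖_{h_s} ≤ ‖α‖_{h_s} + C‖u‖_{H¹}²`. -/
theorem dressing_flow_preserves_hs (s : ℝ) (hs0 : 0 < s) (hs2 : s < 2) :
    ∃ C > 0, ∀ (u α : EuclideanSpace ℝ (Fin 3) → ℂ),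
      Differentiable ℝ u → MemLp u 2 volume →
      MemLp (fun x => fderiv ℝ u x) 2 volume →
      Measurable α →
      ∀ θ : ℝ, θ ∈ Set.Icc (-1 : ℝ) 1 →
        (∫⁻ k, ENNReal.ofReal (ω k ^ (2 * s) * ‖αθ u α θ k‖ ^ 2))
            ^ (1 / 2 : ℝ) ≤
          (∫⁻ k, ENNReal.ofReal (ω k ^ (2 * s) * ‖α k‖ ^ 2)) ^ (1 / 2 : ℝ) +
            ENNReal.ofReal (C * H1norm u ^ 2) := by
  obtain ⟨C, hC, hbound⟩ := dressing_flow_preserves_hs_general hs2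
  simp only [← hsNorm_eq_lintegral]
  refine ⟨C, hC, fun u α hd hu hdu hα θ hθ =>
    (hbound u α hd hu hdu hα.aestronglyMeasurable θ).trans ?_⟩
  gcongr
  exact mul_le_of_le_one_right hC.le (abs_le.2 hθ)

end
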